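/- For the Weierstrass ℘-function with period lattice L_ω = ω·ℤ[τ] satisfying ℘′(z)² = 4℘(z)³ − 1, one has ℘(√−3·ω/6, L_ω) = −∛2. -/

import Mathlib

noncomputable section

open Complex Real ComplexConjugate

/-- `τ = (−1+√−3)/2`, a primitive cube root of unity. -/
def tau : ℂ := (-1 + Real.sqrt 3 * Complex.I) / 2

/-- `√−3 = 1 + 2τ`, the square root of `−3` with positive imaginary part. -/
def sqrtm3 : ℂ := Real.sqrt 3 * Complex.I

/-- The ring of integers `O_K = ℤ[τ]` of `K = ℚ(√−3)`, as a subring of `ℂ`. -/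
def Eis : Subring ℂ := Subring.closure {tau}

/-- `τ` as an element of `ℤ[τ]`. -/
def tauO : Eis := ⟨tau, Subring.subset_closure rfl⟩

/-- `√−3` as an element of `ℤ[τ]`. -/
def sqrtm3O : Eis := 1 + 2 * tauO

/-- Membership in the lattice `L_ω = ω·ℤ[τ]`. -/
def inLattice (ω : ℝ) (z : ℂ) : Prop := ∃ a : Eis, z = (ω : ℂ) * a

/-- The Weierstrass `℘`-function of the lattice `L_ω = ω·ℤ[τ]`. -/
def wp (ω : ℝ) (z : ℂ) : ℂ :=
  1 / z ^ 2 + ∑' a : {w : ℂ // inLattice ω w ∧ w ≠ 0},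
    (1 / (z - (a : ℂ)) ^ 2 - 1 / (a : ℂ) ^ 2)

/-- The Weierstrass `ζ`-function of the lattice `L_ω = ω·ℤ[τ]`. -/
def wzeta (ω : ℝ) (z : ℂ) : ℂ :=
  1 / z + ∑' a : {w : ℂ // inLattice ω w ∧ w ≠ 0},
    (1 / (z - (a : ℂ)) + 1 / (a : ℂ) + z / (a : ℂ) ^ 2)

/-- The real cube root of 2, as a complex number. -/
def cbrt2 : ℂ := ((2 : ℝ) ^ ((1 : ℝ) / 3) : ℝ)

/-- The real cube root of 4, as a complex number. -/
def cbrt4 : ℂ := ((4 : ℝ) ^ ((1 : ℝ) / 3) : ℝ)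

/-!
Put `L = ω·ℤ[τ]` and `a = √−3·ω/3`. The lattice `L/√−3` is the disjoint union of the cosets
`L`, `L + a` and `L − a`, so regrouping the series for `−3 ℘(√−3 z)`, which is the
`℘`-function of `L/√−3`, gives
`−3 ℘(√−3 z) = ℘(z) + (℘(z + a) − ℘(a)) + (℘(z − a) − ℘(−a))`.
Since `τ L = L`, `℘(τ z) = τ ℘(z)`; as `τ a ≡ a` modulo `L`, this forces `℘(±a) = 0`.
At `z = a/2` the remaining terms are all `℘(a/2)` or `℘(ω/2)`, whence
`℘(a/2) = −2 ℘(ω/2)`. Finally `℘(ω/2)` is real because `L` is stable under conjugation, and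
`4 ℘(ω/2)³ = 1` because `℘′(ω/2) = 0`; so `2 ℘(ω/2) = ∛2`.
-/

open scoped PeriodPair

section Weierstrass

variable {L M : PeriodPair}

/-- The data `e`, `r` decompose `α⁻¹ M` into the cosets `L − r i`, so this is the formula for `℘`
under the isogeny `ℂ/L → ℂ/M` induced by `α`. -/
theorem weierstrassP_mul_eq_sum_of_equiv {ι : Type*} [Fintype ι] {α : ℂ} {r : ι → ℂ}
    (e : ι × L.lattice ≃ M.lattice) (he : ∀ p, (e p : ℂ) = α * (p.2 - r p.1)) (z : ℂ) :
    ℘[M] (α * z) = (α ^ 2)⁻¹ * ∑ i, (℘[L] (z + r i) - ℘[L] (r i)) := by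
  have hterm (i : ι) (l : L.lattice) :
      1 / (α * z - e (i, l)) ^ 2 - 1 / (e (i, l) : ℂ) ^ 2 =
        (α ^ 2)⁻¹ * (1 / (z + r i - l) ^ 2 - 1 / l ^ 2 - (1 / (r i - l) ^ 2 - 1 / l ^ 2)) := by
    have hz : α * z - α * (l - r i) = α * (z + r i - l) := by ring
    have h0 : α * (l - r i) = -(α * (r i - l)) := by ring
    rw [he, hz, h0, neg_sq, mul_pow, mul_pow]
    simp only [one_div, mul_inv]
    ring
  have hcoset (i : ι) : HasSum (fun l : L.lattice ↦
      1 / (α * z - e (i, l)) ^ 2 - 1 / (e (i, l) : ℂ) ^ 2)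
      ((α ^ 2)⁻¹ * (℘[L] (z + r i) - ℘[L] (r i))) := by
    simpa only [hterm] using
      ((L.hasSum_weierstrassP (z + r i)).sub (L.hasSum_weierstrassP (r i))).mul_left (α ^ 2)⁻¹
  rw [Finset.mul_sum]
  exact ((e.hasSum_iff.2 (M.hasSum_weierstrassP (α * z))).prod_fiberwise hcoset).unique
    (hasSum_fintype _)

theorem weierstrassP_mul {α : ℂ} (hα : α ≠ 0)
    (h : ∀ w, w ∈ L.lattice ↔ α * w ∈ M.lattice) (z : ℂ) :
    ℘[M] (α * z) = (α ^ 2)⁻¹ * ℘[L] z := by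
  let e : L.lattice ≃ M.lattice := (Equiv.mulLeft₀ α hα).subtypeEquiv h
  simpa using weierstrassP_mul_eq_sum_of_equiv (r := fun _ ↦ 0)
    ((Equiv.uniqueProd L.lattice Unit).trans e) (fun p ↦ by rw [sub_zero]; rfl) z

theorem weierstrassP_eq_zero_of_mul_sub_mem {α z : ℂ} (hα : α ≠ 0) (hα2 : α ^ 2 ≠ 1)
    (h : ∀ w, w ∈ L.lattice ↔ α * w ∈ L.lattice) (hz : α * z - z ∈ L.lattice) :
    ℘[L] z = 0 := by
  have hfix : (α ^ 2)⁻¹ * ℘[L] z = ℘[L] z := by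
    rw [← weierstrassP_mul hα h, ← L.weierstrassP_add_coe z ⟨_, hz⟩, add_sub_cancel]
  by_contra hne
  exact hα2 (inv_eq_one.1 (mul_eq_right₀ hne |>.1 hfix))

theorem weierstrassP_conj (h : ∀ w ∈ L.lattice, conj w ∈ L.lattice) (z : ℂ) :
    ℘[L] (conj z) = conj (℘[L] z) := by
  let e : L.lattice ≃ L.lattice :=
    Function.Involutive.toPerm (fun l ↦ ⟨conj l, h l l.2⟩) fun l ↦ by simp
  refine (e.hasSum_iff.2 (L.hasSum_weierstrassP (conj z))).unique ?_
  convert (L.hasSum_weierstrassP z).map (starRingEnd ℂ) Complex.continuous_conj using 1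
  ext l
  have hl : (e l : ℂ) = conj (l : ℂ) := rfl
  simp [hl]

theorem derivWeierstrassP_div_two {l : ℂ} (hl : l ∈ L.lattice) : ℘'[L] (l / 2) = 0 := by
  have hodd : ℘'[L] (l / 2) = -℘'[L] (l / 2) := by
    calc ℘'[L] (l / 2) = ℘'[L] (-(l / 2) + l) := by ring_nf
      _ = ℘'[L] (-(l / 2)) := L.derivWeierstrassP_add_coe _ ⟨l, hl⟩
      _ = -℘'[L] (l / 2) := L.derivWeierstrassP_neg _
  exact CharZero.eq_neg_self_iff.1 hodd

end Weierstrass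

section Eisenstein

lemma tau_sq : tau ^ 2 = -1 - tau := by
  have h3 : ((√3 : ℝ) : ℂ) ^ 2 = 3 := by norm_cast; simp
  unfold tau
  linear_combination (I ^ 2 / 4) * h3 + (3 / 4) * I_sq

lemma tau_cubed : tau ^ 3 = 1 := by
  linear_combination (tau - 1) * tau_sq

lemma tau_ne_zero : tau ≠ 0 := fun h ↦ by simpa [h] using tau_cubed

lemma tau_im : tau.im = √3 / 2 := by
  simp [tau]

lemma tau_sq_ne_one : tau ^ 2 ≠ 1 := fun h ↦ by
  have hτ : tau = -2 := by linear_combination tau_sq - h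
  norm_num [hτ] at h

lemma conj_tau : conj tau = -1 - tau := by
  simp only [tau, map_div₀, map_add, map_neg, map_one, map_mul, conj_ofReal, conj_I, map_ofNat]
  ring

lemma sqrtm3_eq : sqrtm3 = 1 + 2 * tau := by
  unfold sqrtm3 tau; ring

lemma sqrtm3_sq : sqrtm3 ^ 2 = -3 := by
  rw [sqrtm3_eq]; linear_combination 4 * tau_sq

lemma mem_eis_iff {z : ℂ} : z ∈ Eis ↔ ∃ m n : ℤ, m + n * tau = z := by
  constructor
  · intro h
    induction h using Subring.closure_induction with
    | mem x hx => exact ⟨0, 1, by simpa using hx.symm⟩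
    | zero => exact ⟨0, 0, by simp⟩
    | one => exact ⟨1, 0, by simp⟩
    | add x y _ _ hx hy =>
      obtain ⟨a, b, rfl⟩ := hx
      obtain ⟨c, d, rfl⟩ := hy
      exact ⟨a + c, b + d, by push_cast; ring⟩
    | neg x _ hx =>
      obtain ⟨a, b, rfl⟩ := hx
      exact ⟨-a, -b, by push_cast; ring⟩
    | mul x y _ _ hx hy =>
      obtain ⟨a, b, rfl⟩ := hx
      obtain ⟨c, d, rfl⟩ := hy
      exact ⟨a * c - b * d, a * d + b * c - b * d, by
        push_cast; linear_combination (-b * d : ℂ) * tau_sq⟩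
  · rintro ⟨m, n, rfl⟩
    exact add_mem (intCast_mem _ m) (mul_mem (intCast_mem _ n) tauO.2)

/-- The map `(i, (m, n)) ↦ √−3 (m + n τ) + i` in coordinates with respect to `1, τ`, with the
residues modulo `√−3` represented by the signs `−1, 0, 1`. -/
def sqrtm3MulAdd (p : SignType × ℤ × ℤ) : ℤ × ℤ :=
  (p.2.1 - 2 * p.2.2 + p.1, 2 * p.2.1 - p.2.2)

lemma sqrtm3MulAdd_bijective : Function.Bijective sqrtm3MulAdd := by
  constructor
  · rintro ⟨i, m, n⟩ ⟨j, m', n'⟩ h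
    obtain ⟨h₁, h₂⟩ := Prod.mk.inj h
    dsimp only at h₁ h₂
    have hsign : ∀ i j : SignType, (3 : ℤ) ∣ i - j → i = j := by decide
    obtain rfl : i = j := hsign i j ⟨m - m', by linarith⟩
    ext <;> dsimp only <;> linarith
  · rintro ⟨p, q⟩
    obtain ⟨i, k, hk⟩ : ∃ (i : SignType) (k : ℤ), p + q = 3 * k + i := by
      have : (p + q) % 3 = 0 ∨ (p + q) % 3 = 1 ∨ (p + q) % 3 = 2 := by omega
      rcases this with h | h | h
      · exact ⟨0, (p + q) / 3, by rw [SignType.coe_zero]; omega⟩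
      · exact ⟨1, (p + q) / 3, by rw [SignType.coe_one]; omega⟩
      · exact ⟨-1, (p + q) / 3 + 1, by rw [SignType.coe_neg_one]; omega⟩
    exact ⟨(i, q - k, q - 2 * k), by ext <;> simp only [sqrtm3MulAdd] <;> linarith⟩

lemma sqrtm3MulAdd_coe (i : SignType) (x : ℤ × ℤ) :
    ((sqrtm3MulAdd (i, x)).1 + (sqrtm3MulAdd (i, x)).2 * tau : ℂ) =
      sqrtm3 * (x.1 + x.2 * tau) + (i : ℤ) := by
  simp only [sqrtm3MulAdd, sqrtm3_eq]
  push_cast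
  linear_combination (-2 * x.2 : ℂ) * tau_sq

end Eisenstein

lemma linearIndependent_mul_of_im_ne_zero {c z : ℂ} (hc : c ≠ 0) (hz : z.im ≠ 0) :
    LinearIndependent ℝ ![c, c * z] := by
  rw [LinearIndependent.pair_iff]
  intro s t h
  have hst : (s + t * z : ℂ) = 0 := by
    refine (mul_eq_zero.1 (?_ : c * (s + t * z) = 0)).resolve_left hc
    simp only [real_smul] at h
    linear_combination h
  have ht : t = 0 := by simpa [hz] using congrArg Complex.im hst
  exact ⟨by simpa [ht] using hst, ht⟩

/-- The periods `c, cτ`, generating the lattice `c·ℤ[τ]`. -/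
def eisensteinPeriods (c : ℂ) (hc : c ≠ 0) : PeriodPair :=
  ⟨c, c * tau, linearIndependent_mul_of_im_ne_zero hc (by simp [tau_im])⟩

section EisensteinLattice

variable {c : ℂ} (hc : c ≠ 0)

lemma mem_eisensteinPeriods_lattice_iff {z : ℂ} :
    z ∈ (eisensteinPeriods c hc).lattice ↔ ∃ a ∈ Eis, z = c * a := by
  rw [PeriodPair.mem_lattice]
  constructor
  · rintro ⟨m, n, rfl⟩
    exact ⟨m + n * tau, mem_eis_iff.2 ⟨m, n, rfl⟩, by simp only [eisensteinPeriods]; ring⟩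
  · rintro ⟨_, ha, rfl⟩
    obtain ⟨m, n, rfl⟩ := mem_eis_iff.1 ha
    exact ⟨m, n, by simp only [eisensteinPeriods]; ring⟩

lemma mul_mem_eisensteinPeriods_lattice {a z : ℂ} (ha : a ∈ Eis)
    (hz : z ∈ (eisensteinPeriods c hc).lattice) : a * z ∈ (eisensteinPeriods c hc).lattice := by
  obtain ⟨b, hb, rfl⟩ := (mem_eisensteinPeriods_lattice_iff hc).1 hz
  exact (mem_eisensteinPeriods_lattice_iff hc).2 ⟨a * b, mul_mem ha hb, by ring⟩

lemma tau_mul_mem_eisensteinPeriods_lattice_iff (z : ℂ) :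
    z ∈ (eisensteinPeriods c hc).lattice ↔ tau * z ∈ (eisensteinPeriods c hc).lattice := by
  refine ⟨mul_mem_eisensteinPeriods_lattice hc tauO.2, fun h ↦ ?_⟩
  convert mul_mem_eisensteinPeriods_lattice hc (pow_mem tauO.2 2) h using 1
  change z = tau ^ 2 * (tau * z)
  linear_combination (-z) * tau_cubed

lemma weierstrassP_sqrtm3_mul_div_three :
    ℘[eisensteinPeriods c hc] (sqrtm3 * c / 3) = 0 := by
  refine weierstrassP_eq_zero_of_mul_sub_mem tau_ne_zero tau_sq_ne_one
    (tau_mul_mem_eisensteinPeriods_lattice_iff hc) ?_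
  refine (mem_eisensteinPeriods_lattice_iff hc).2
    ⟨-1 - tau, sub_mem (neg_mem (one_mem _)) tauO.2, ?_⟩
  rw [sqrtm3_eq]
  linear_combination (2 * c / 3) * tau_sq

lemma exists_equiv_coe_eq_sqrtm3_mul_add :
    ∃ e : SignType × (eisensteinPeriods c hc).lattice ≃ (eisensteinPeriods c hc).lattice,
      ∀ p, (e p : ℂ) = sqrtm3 * p.2 + (p.1 : ℤ) * c := by
  let coords := (eisensteinPeriods c hc).latticeEquivProd.toEquiv
  have hcoords (x : ℤ × ℤ) : (coords.symm x : ℂ) = c * (x.1 + x.2 * tau) := by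
    refine ((eisensteinPeriods c hc).latticeEquiv_symm_apply x).trans ?_
    simp only [eisensteinPeriods]
    ring
  refine ⟨((Equiv.refl _).prodCongr coords).trans
    ((Equiv.ofBijective _ sqrtm3MulAdd_bijective).trans coords.symm), fun ⟨i, l⟩ ↦ ?_⟩
  obtain ⟨x, rfl⟩ := coords.symm.surjective l
  simp only [Equiv.trans_apply, Equiv.prodCongr_apply, Prod.map_apply, Equiv.refl_apply,
    Equiv.apply_symm_apply, Equiv.ofBijective_apply, hcoords, sqrtm3MulAdd_coe]
  ring

theorem weierstrassP_sqrtm3_mul (z : ℂ) :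
    -3 * ℘[eisensteinPeriods c hc] (sqrtm3 * z) =
      ℘[eisensteinPeriods c hc] z + ℘[eisensteinPeriods c hc] (z + sqrtm3 * c / 3)
        + ℘[eisensteinPeriods c hc] (z - sqrtm3 * c / 3) := by
  obtain ⟨e, he⟩ := exists_equiv_coe_eq_sqrtm3_mul_add hc
  let r (i : SignType) : ℂ := (i : ℤ) * (sqrtm3 * c / 3)
  have her (p) : (e p : ℂ) = sqrtm3 * (p.2 - r p.1) := by
    rw [he]
    linear_combination ((p.1 : ℤ) * c / 3 : ℂ) * sqrtm3_sq
  have hsum (f : SignType → ℂ) : ∑ i, f i = f 0 + (f (-1) + f 1) := by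
    simp [SignType.univ_eq]
  have hr0 : r 0 = 0 := by simp [r]
  have hr1 : r 1 = sqrtm3 * c / 3 := by simp [r]
  have hr_neg : r (-1) = -(sqrtm3 * c / 3) := by simp [r]
  rw [weierstrassP_mul_eq_sum_of_equiv e her, sqrtm3_sq, hsum, hr0, hr1, hr_neg, add_zero,
    PeriodPair.weierstrassP_zero, PeriodPair.weierstrassP_neg,
    weierstrassP_sqrtm3_mul_div_three, ← sub_eq_add_neg]
  ring

theorem weierstrassP_sqrtm3_mul_div_six :
    ℘[eisensteinPeriods c hc] (sqrtm3 * c / 6) = -2 * ℘[eisensteinPeriods c hc] (c / 2) := by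
  set L := eisensteinPeriods c hc
  have hmul := weierstrassP_sqrtm3_mul hc (sqrtm3 * c / 6)
  have hl : sqrtm3 * (sqrtm3 * c / 6) = -(c / 2) := by linear_combination (c / 6) * sqrtm3_sq
  have hadd : sqrtm3 * c / 6 + sqrtm3 * c / 3 = c / 2 + L.ω₂ := by
    rw [sqrtm3_eq, show L.ω₂ = c * tau from rfl]; ring
  have hsub : sqrtm3 * c / 6 - sqrtm3 * c / 3 = -(sqrtm3 * c / 6) := by ring
  rw [hl, hadd, hsub, L.weierstrassP_neg, L.weierstrassP_neg,
    L.weierstrassP_add_coe _ ⟨_, L.ω₂_mem_lattice⟩] at hmul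
  linear_combination -hmul / 2

end EisensteinLattice

section RealEisensteinLattice

variable {ω : ℝ} (hω : (ω : ℂ) ≠ 0)

lemma conj_mem_eisensteinPeriods_lattice {z : ℂ} (hz : z ∈ (eisensteinPeriods ω hω).lattice) :
    conj z ∈ (eisensteinPeriods ω hω).lattice := by
  obtain ⟨m, n, rfl⟩ := PeriodPair.mem_lattice.1 hz
  refine PeriodPair.mem_lattice.2 ⟨m - n, -n, ?_⟩
  simp only [eisensteinPeriods, map_add, map_mul, conj_tau, conj_ofReal, map_intCast]
  push_cast
  ring

lemma inLattice_iff_mem_eisensteinPeriods_lattice {z : ℂ} :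
    inLattice ω z ↔ z ∈ (eisensteinPeriods ω hω).lattice := by
  simp [mem_eisensteinPeriods_lattice_iff, inLattice]

theorem wp_eq_weierstrassP : wp ω = ℘[eisensteinPeriods ω hω] := by
  ext z
  set L := eisensteinPeriods ω hω
  let incl (a : {w : ℂ // inLattice ω w ∧ w ≠ 0}) : L.lattice :=
    ⟨a, (inLattice_iff_mem_eisensteinPeriods_lattice hω).1 a.2.1⟩
  have hincl : incl.Injective := fun a b h ↦
    Subtype.ext (congrArg (fun l : L.lattice ↦ (l : ℂ)) h)
  let f (l : L.lattice) : ℂ := if (l : ℂ) = 0 then 0 else 1 / (z - l) ^ 2 - 1 / (l : ℂ) ^ 2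
  have hsupp : f.support ⊆ Set.range incl := fun l hl ↦
    ⟨⟨l, (inLattice_iff_mem_eisensteinPeriods_lattice hω).2 l.2, fun h0 ↦ hl (if_pos h0)⟩, rfl⟩
  calc wp ω z = 1 / z ^ 2 + ∑' a, f (incl a) := by
        unfold wp
        congr 2 with a
        exact (if_neg a.2.2).symm
    _ = 1 / z ^ 2 + L.weierstrassPExcept 0 z := by rw [hincl.tsum_eq hsupp]; rfl
    _ = ℘[L] z := by simpa [add_comm] using L.weierstrassPExcept_add 0 z

end RealEisensteinLattice

lemma eq_cbrt2_of_pow_three_eq_two {x : ℂ} (hreal : conj x = x) (hx : x ^ 3 = 2) : x = cbrt2 := by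
  obtain ⟨y, rfl⟩ := conj_eq_iff_real.1 hreal
  have hy : y ^ 3 = ((2 : ℝ) ^ ((1 : ℝ) / 3)) ^ 3 := by
    rw [show ((2 : ℝ) ^ ((1 : ℝ) / 3)) ^ 3 = 2 by
      simpa using Real.rpow_inv_natCast_pow zero_le_two three_ne_zero]
    exact_mod_cast hx
  rw [cbrt2, Odd.pow_injective (by decide : Odd 3) hy]

/-- From [Qiu], (2.13): `℘(√−3·ω/6) = −∛2`, with `√−3 = 1 + 2τ` the square root of `−3` with positive imaginary part.
Here `ω > 0` is pinned down by the differential equation `℘′² = 4℘³ − 1` for the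
lattice `L_ω = ω·ℤ[τ]` (equivalently, the lattice invariants are `g₂ = 0`, `g₃ = 1`). -/
theorem wp_value_at_sqrt_point
    (ω : ℝ) (hω : 0 < ω)
    (hODE : ∀ z : ℂ, ¬ inLattice ω z → deriv (wp ω) z ^ 2 = 4 * wp ω z ^ 3 - 1) :
    wp ω (sqrtm3 * (ω : ℂ) / 6) = -cbrt2 := by
  have hω₀ : (ω : ℂ) ≠ 0 := ofReal_ne_zero.2 hω.ne'
  let L := eisensteinPeriods ω hω₀
  have hwp : wp ω = ℘[L] := wp_eq_weierstrassP hω₀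
  have hcube : (2 * ℘[L] (ω / 2)) ^ 3 = 2 := by
    have hmem : ¬ inLattice ω (ω / 2) :=
      mt (inLattice_iff_mem_eisensteinPeriods_lattice hω₀).1 L.ω₁_div_two_notMem_lattice
    have hderiv : ℘'[L] (ω / 2) = 0 := derivWeierstrassP_div_two L.ω₁_mem_lattice
    have hode := hODE (ω / 2) hmem
    rw [hwp, L.deriv_weierstrassP, hderiv] at hode
    linear_combination -2 * hode
  have hreal : conj (2 * ℘[L] (ω / 2)) = 2 * ℘[L] (ω / 2) := by
    rw [map_mul, map_ofNat, ← weierstrassP_conj fun _ ↦ conj_mem_eisensteinPeriods_lattice hω₀,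
      map_div₀, map_ofNat, conj_ofReal]
  rw [hwp, weierstrassP_sqrtm3_mul_div_six hω₀, neg_mul,
    eq_cbrt2_of_pow_three_eq_two hreal hcube]
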